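/- Let G be a tree with n vertices and diameter d that is not a caterpillar, let P = {v_0, v_1, …, v_s} (s ≤ d) be a leaf-to-leaf path in G, and let y be a leaf of G that is neither on P nor adjacent to P. If G* = σ(G,P;y), then H*(π*, v_j) < H(π, v_j) for every 0 ≤ j ≤ s. -/

import Mathlib

/-!
Fix the target `z = v_j`. The hitting times `h(u) = H(u, z)` are the unique solution of
`h(z) = 0` and `Σ_{w ~ u} (h(u) - h(w)) = deg u` for `u ≠ z` (`exists_isSol`, `hit_eq`), and
`2|E| · H(π, z) = Σ_u deg(u) h(u)`. By Green's identity this number is the maximum, over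
functions `f` with `f(z) = 0`, of
`energy f = 2 Σ_u deg(u) f(u) - Σ_{ab ∈ E} (f(a) - f(b))²`, attained at `f = h`
(`energy_sol`, `energy_le`).

Let `h'` be the hitting times of `z` in `G*`. As a competitor on `G`, take `f = h'` away from `y`
and `f(y) = h'(x) + 1`, where `x` is the neighbor of `y` in `G`. Since
`h'(y) = h'(v_k) + 1`, the energy of `f` on `G` exceeds the energy of `h'` on `G*` by exactly
`4 (h'(x) - h'(v_k))`: only the pendant edge at `y` differs. In `G*` the vertex `v_k` separates `x`
from `z` (`mem_support_of_closest`), so `h'(v_k) < h'(x)` by a minimum principle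
(`lt_of_separated`). The numbers of edges agree, and the claim follows.
-/

open scoped Classical

namespace RWMix

/-- The degree of a vertex. -/
noncomputable def deg {W : Type*} (G : SimpleGraph W) (v : W) : ℕ :=
  Nat.card {w // G.Adj v w}

/-- The number of edges of a graph. -/
noncomputable def numEdges {W : Type*} (G : SimpleGraph W) : ℕ :=
  Nat.card G.edgeSet

/-- Transition matrix of the simple random walk: from `u` move to each neighbor
with probability `1/deg u`. -/
noncomputable def step {V : Type*} [Fintype V] (G : SimpleGraph V) : Matrix V V ℝ :=
  Matrix.of fun u w => if G.Adj u w then ((deg G u : ℝ))⁻¹ else 0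

/-- The walk killed at `v` (rows at `v` are zeroed out). -/
noncomputable def killed {V : Type*} [Fintype V] (G : SimpleGraph V) (v : V) :
    Matrix V V ℝ :=
  Matrix.of fun u w => if u = v then 0 else step G u w

/-- Expected hitting time `H(u,v)`: the sum over `t ≥ 0` of the probability that the walk
started at `u` has not visited `v` through time `t`.  This equals the expectation of the
first hitting time of `v`, and `hit G u u = 0`. -/
noncomputable def hit {V : Type*} [Fintype V] [DecidableEq V]
    (G : SimpleGraph V) (u v : V) : ℝ :=
  ∑' t : ℕ, ∑ w : V, (killed G v ^ t) u w * (if w = v then (0 : ℝ) else 1)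

/-- The stationary distribution: `π v = deg v / (2 |E|)`. -/
noncomputable def statPr {V : Type*} [Fintype V] (G : SimpleGraph V) (v : V) : ℝ :=
  (deg G v : ℝ) / (2 * (numEdges G : ℝ))

/-- The access time `H(π, v) = ∑_u π_u H(u,v)`. -/
noncomputable def hitPi {V : Type*} [Fintype V] [DecidableEq V]
    (G : SimpleGraph V) (v : V) : ℝ :=
  ∑ u : V, statPr G u * hit G u v

/-- The mixing time from vertex `v`: `H(v,π) = max_w H(w,v) − H(π,v)`. -/
noncomputable def mixFrom {V : Type*} [Fintype V] [DecidableEq V]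
    (G : SimpleGraph V) (v : V) : ℝ :=
  (⨆ w : V, hit G w v) - hitPi G v

/-- The (exact) mixing time `T_mix(G) = max_v H(v,π)`. -/
noncomputable def Tmix {V : Type*} [Fintype V] [DecidableEq V]
    (G : SimpleGraph V) : ℝ :=
  ⨆ v : V, mixFrom G v

/-- Edges of the double broom, on vertex set `Fin (d+1) ⊕ Fin a ⊕ Fin b`:
the spine path `v_0, …, v_d`, extra left leaves attached to `v_1`,
and extra right leaves attached to `v_{d-1}`. -/
def broomRel (d : ℕ) {a b : ℕ} :
    (Fin (d+1) ⊕ Fin a ⊕ Fin b) → (Fin (d+1) ⊕ Fin a ⊕ Fin b) → Prop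
  | Sum.inl i, Sum.inl j => (i : ℕ) + 1 = (j : ℕ)
  | Sum.inr (Sum.inl _), Sum.inl j => (j : ℕ) = 1
  | Sum.inr (Sum.inr _), Sum.inl j => (j : ℕ) = d - 1
  | _, _ => False

/-- The double broom of diameter `d` with `ℓ` left leaves and `r` right leaves:
the diametral path is `v_0, …, v_d` (where `v_0` is one left leaf and `v_d` one right
leaf), together with `ℓ - 1` further pendant leaves at `v_1` and `r - 1` further pendant
leaves at `v_{d-1}`.  It has `d - 1 + ℓ + r` vertices. -/
def doubleBroom (d ℓ r : ℕ) :
    SimpleGraph (Fin (d+1) ⊕ Fin (ℓ-1) ⊕ Fin (r-1)) :=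
  SimpleGraph.fromRel (broomRel d)

/-- The balanced double broom `D_{n,d}`, with `ℓ = ⌈(n-d+1)/2⌉` and `r = ⌊(n-d+1)/2⌋`. -/
def balancedDB (n d : ℕ) :=
  doubleBroom d ((n - d + 2) / 2) ((n - d + 1) / 2)

/-- A leaf is a vertex of degree one. -/
def IsLeaf {W : Type*} (G : SimpleGraph W) (v : W) : Prop := deg G v = 1

/-- `v 0, v 1, …, v s` is a leaf-to-leaf path in `G`. -/
def IsLeafPath {W : Type*} (G : SimpleGraph W) (s : ℕ) (v : Fin (s+1) → W) : Prop :=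
  Function.Injective v ∧
  (∀ i : ℕ, ∀ h : i < s, G.Adj (v ⟨i, by omega⟩) (v ⟨i + 1, by omega⟩)) ∧
  IsLeaf G (v 0) ∧ IsLeaf G (v (Fin.last s))

/-- A caterpillar: every vertex is within distance one of a fixed leaf-to-leaf path
(the spine). -/
def IsCaterpillar {W : Type*} (G : SimpleGraph W) : Prop :=
  ∃ (s : ℕ) (v : Fin (s+1) → W), IsLeafPath G s v ∧ ∀ w, ∃ i, G.dist w (v i) ≤ 1

/-- Move the leaf `y` from its neighbor `a` to the new neighbor `b`:
delete the edge `{a,y}` and add the edge `{b,y}`. -/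
def moveLeaf {W : Type*} (G : SimpleGraph W) (a y b : W) : SimpleGraph W :=
  SimpleGraph.fromEdgeSet ((G.edgeSet \ {s(a, y)}) ∪ {s(b, y)})

/-- A graph is a double broom if it is isomorphic to some `doubleBroom d ℓ r`
with `ℓ, r ≥ 1`. -/
def IsDoubleBroom {W : Type*} (G : SimpleGraph W) : Prop :=
  ∃ (d ℓ r : ℕ), 1 ≤ ℓ ∧ 1 ≤ r ∧ Nonempty (G ≃g doubleBroom d ℓ r)

/-- A near double broom: not a double broom, but there is exactly one leaf whose
removal results in a double broom. -/
def IsNearDoubleBroom {W : Type*} (G : SimpleGraph W) : Prop :=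
  ¬ IsDoubleBroom G ∧
    ∃! x : W, IsLeaf G x ∧ IsDoubleBroom (G.induce {y | y ≠ x})

/-- `w` belongs to the set `V_k`: either `w = v k`, or `w` is a vertex off the spine
adjacent to `v k`. -/
def inVk {W : Type*} {d : ℕ} (G : SimpleGraph W) (v : Fin (d+1) → W)
    (k : Fin (d+1)) (w : W) : Prop :=
  w = v k ∨ ((∀ m, w ≠ v m) ∧ G.Adj (v k) w)


/-! ### Solving the hitting-time system -/

/-- `Σ F a b` over the ordered adjacent pairs `(a, b)`. -/
noncomputable def adjSum {V : Type*} [Fintype V] (G : SimpleGraph V) (F : V → V → ℝ) : ℝ :=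
  ∑ a, ∑ b, if G.Adj a b then F a b else 0

lemma deg_eq_sum {V : Type*} [Fintype V] (G : SimpleGraph V) (u : V) :
    (deg G u : ℝ) = ∑ w, if G.Adj u w then (1 : ℝ) else 0 := by
  rw [deg, Nat.card_eq_fintype_card, Fintype.card_subtype, Finset.sum_boole]

lemma two_numEdges {V : Type*} [Fintype V] (G : SimpleGraph V) :
    2 * (numEdges G : ℝ) = adjSum G fun _ _ => 1 := by
  have h := G.sum_degrees_eq_twice_card_edges
  have h1 : numEdges G = G.edgeFinset.card := by
    rw [numEdges, Nat.card_eq_fintype_card, SimpleGraph.edgeFinset_card]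
  have h2 : ∀ u, (deg G u : ℝ) = (G.degree u : ℝ) := fun u => by
    rw [deg, Nat.card_eq_fintype_card, ← SimpleGraph.card_neighborSet_eq_degree]
    exact congrArg _ (Fintype.card_congr (Equiv.refl _))
  simp only [adjSum, ← deg_eq_sum, h2, h1]
  exact_mod_cast h.symm

lemma deg_pos_of_adj {V : Type*} [Fintype V] {G : SimpleGraph V} {u w : V} (h : G.Adj u w) :
    (0 : ℝ) < deg G u := by
  rw [deg_eq_sum]
  refine Finset.sum_pos' (fun i _ => by split_ifs <;> norm_num) ⟨w, Finset.mem_univ _, ?_⟩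
  simp [h]

/-- `h` solves the hitting-time system for the target `z`: it vanishes at `z`, and elsewhere
`h u = 1 + (1 / deg u) Σ_{w ~ u} h w`, cleared of denominators. -/
structure IsSol {V : Type*} [Fintype V] (G : SimpleGraph V) (z : V) (h : V → ℝ) : Prop where
  zero : h z = 0
  eq : ∀ u, u ≠ z → ∑ w, (if G.Adj u w then h u - h w else 0) = deg G u

/-- Minimum principle: a function that vanishes at `z` and is superharmonic elsewhere is
nonnegative. -/
lemma min_principle {V : Type*} [Fintype V] {G : SimpleGraph V} (hG : G.Preconnected) (z : V)
    (f : V → ℝ) (hz : f z = 0)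
    (hf : ∀ u, u ≠ z → 0 ≤ ∑ w, (if G.Adj u w then f u - f w else 0)) : ∀ u, 0 ≤ f u := by
  obtain ⟨m, -, hm⟩ := Finset.exists_min_image Finset.univ f ⟨z, Finset.mem_univ z⟩
  -- A negative minimum would propagate along edges all the way to `z`.
  suffices h : 0 ≤ f m from fun u => h.trans (hm u (Finset.mem_univ u))
  by_contra! hneg
  have key : ∀ (a b : V) (_ : G.Walk a b), f a = f m → f b = f m := by
    intro a b p
    induction p with
    | nil => exact id
    | @cons a c b hac p ih =>
      intro ha
      apply ih
      have haz : a ≠ z := fun e => by rw [e, hz] at ha; linarith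
      have hnp : ∀ w ∈ Finset.univ, (if G.Adj a w then f a - f w else 0) ≤ 0 := by
        intro w _
        split_ifs
        · rw [ha]; linarith [hm w (Finset.mem_univ w)]
        · exact le_rfl
      have h0 := (Finset.sum_eq_zero_iff_of_nonpos hnp).1
        (le_antisymm (Finset.sum_nonpos hnp) (hf a haz)) c (Finset.mem_univ c)
      rw [if_pos hac] at h0
      linarith
  obtain ⟨p⟩ := hG m z
  have := key m z p rfl
  linarith

lemma exists_isSol {V : Type*} [Fintype V] {G : SimpleGraph V} (hG : G.Preconnected) (z : V) :
    ∃ h, IsSol G z h := by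
  let A : (V → ℝ) →ₗ[ℝ] (V → ℝ) :=
    { toFun := fun f u => if u = z then f z else ∑ w, if G.Adj u w then f u - f w else 0
      map_add' := fun f g => by
        ext u
        by_cases hu : u = z
        · simp [hu]
        · simp only [hu, if_false, Pi.add_apply, ← Finset.sum_add_distrib]
          refine Finset.sum_congr rfl fun w _ => ?_
          split_ifs <;> ring
      map_smul' := fun c f => by
        ext u
        by_cases hu : u = z
        · simp [hu]
        · simp only [hu, if_false, Pi.smul_apply, smul_eq_mul, Finset.mul_sum, RingHom.id_apply]
          refine Finset.sum_congr rfl fun w _ => ?_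
          split_ifs <;> ring }
  have hA : ∀ f u, A f u = if u = z then f z else ∑ w, if G.Adj u w then f u - f w else 0 :=
    fun _ _ => rfl
  have nonneg : ∀ f, A f = 0 → ∀ u, 0 ≤ f u := by
    intro f hf
    refine min_principle hG z f ?_ fun u hu => ?_
    · simpa [hA] using congrFun hf z
    · have := congrFun hf u
      rw [hA, if_neg hu] at this
      exact this.ge
  have inj : Function.Injective A := by
    refine (injective_iff_map_eq_zero A).2 fun f hf => ?_
    ext u
    have h1 := nonneg f hf u
    have h2 := nonneg (-f) (by rw [map_neg, hf, neg_zero]) u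
    simp only [Pi.neg_apply, Pi.zero_apply] at h2 ⊢
    linarith
  obtain ⟨h, hh⟩ := (LinearMap.injective_iff_surjective.1 inj)
    (fun u => if u = z then 0 else (deg G u : ℝ))
  refine ⟨h, ?_, fun u hu => ?_⟩
  · simpa [hA] using congrFun hh z
  · have := congrFun hh u
    simpa only [hA, if_neg hu] using this

lemma IsSol.nonneg {V : Type*} [Fintype V] {G : SimpleGraph V} (hG : G.Preconnected) {z : V}
    {h : V → ℝ} (hs : IsSol G z h) : ∀ u, 0 ≤ h u :=
  min_principle hG z h hs.zero fun u hu => by rw [hs.eq u hu]; positivity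

/-- The series defining `hit` sums to the solution `h` of the hitting-time system: its partial
sums are `h` minus a nonnegative remainder, which tends to `0` because it is dominated by a
multiple of the terms of the (hence convergent) series. -/
lemma hit_eq {V : Type*} [Fintype V] [DecidableEq V] {G : SimpleGraph V} (hG : G.Preconnected)
    {z : V} {h : V → ℝ} (hs : IsSol G z h) (u : V) : hit G u z = h u := by
  set K := killed G z with hK
  have hnn := hs.nonneg hG
  let g : V → ℝ := fun w => if w = z then (0 : ℝ) else 1
  have hKnn : ∀ a b, 0 ≤ K a b := by
    intro a b
    simp only [hK, killed, step, Matrix.of_apply]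
    split_ifs <;> positivity
  have hPnn : ∀ t : ℕ, ∀ a b, 0 ≤ (K ^ t) a b := by
    intro t
    induction t with
    | zero => intro a b; rw [pow_zero, Matrix.one_apply]; split_ifs <;> norm_num
    | succ t ih =>
      intro a b
      rw [pow_succ, Matrix.mul_apply]
      exact Finset.sum_nonneg fun c _ => mul_nonneg (ih a c) (hKnn c b)
  have hfix : ∀ a, ∑ b, K a b * h b = h a - g a := by
    intro a
    by_cases ha : a = z
    · simp [hK, killed, g, ha, hs.zero]
    · have hd : (0 : ℝ) < deg G a := by
        obtain ⟨p⟩ := hG a z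
        cases p with
        | nil => exact absurd rfl ha
        | cons hac _ => exact deg_pos_of_adj hac
      have h1 := hs.eq a ha
      have h2 : ∑ w, (if G.Adj a w then h a - h w else 0)
          = deg G a * h a - ∑ w, if G.Adj a w then h w else 0 := by
        rw [deg_eq_sum, Finset.sum_mul, ← Finset.sum_sub_distrib]
        refine Finset.sum_congr rfl fun w _ => ?_
        split_ifs <;> ring
      have h3 : ∑ b, K a b * h b = (deg G a : ℝ)⁻¹ * ∑ w, if G.Adj a w then h w else 0 := by
        rw [Finset.mul_sum]
        refine Finset.sum_congr rfl fun w _ => ?_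
        simp only [hK, killed, step, Matrix.of_apply, if_neg ha]
        split_ifs <;> ring
      have h4 : ∑ w, (if G.Adj a w then h w else 0) = deg G a * (h a - 1) := by
        rw [h2] at h1; linarith
      rw [h3, h4, ← mul_assoc, inv_mul_cancel₀ hd.ne', one_mul]
      simp [g, ha]
  have htel : ∀ t : ℕ, ∑ w, (K ^ t) u w * g w
      = ∑ w, (K ^ t) u w * h w - ∑ w, (K ^ (t + 1)) u w * h w := by
    intro t
    have : ∑ w, (K ^ (t + 1)) u w * h w = ∑ w, (K ^ t) u w * (h w - g w) := by
      simp only [pow_succ, Matrix.mul_apply, Finset.sum_mul, ← hfix, Finset.mul_sum, mul_assoc]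
      exact Finset.sum_comm
    rw [this, ← Finset.sum_sub_distrib]
    exact Finset.sum_congr rfl fun w _ => by ring
  have hpart : ∀ T : ℕ, ∑ t ∈ Finset.range T, ∑ w, (K ^ t) u w * g w
      = h u - ∑ w, (K ^ T) u w * h w := by
    intro T
    simp only [htel]
    rw [Finset.sum_range_sub' (fun t => ∑ w, (K ^ t) u w * h w) T]
    simp [Matrix.one_apply]
  have hgnn : ∀ w, 0 ≤ g w := fun w => by simp only [g]; split_ifs <;> norm_num
  have hterm : ∀ t : ℕ, 0 ≤ ∑ w, (K ^ t) u w * g w := fun t =>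
    Finset.sum_nonneg fun w _ => mul_nonneg (hPnn t u w) (hgnn w)
  have hsum : Summable fun t : ℕ => ∑ w, (K ^ t) u w * g w := by
    refine summable_of_sum_range_le (c := h u) hterm fun T => ?_
    rw [hpart]
    have : 0 ≤ ∑ w, (K ^ T) u w * h w :=
      Finset.sum_nonneg fun w _ => mul_nonneg (hPnn T u w) (hnn w)
    linarith
  have hrem : Filter.Tendsto (fun T : ℕ => ∑ w, (K ^ T) u w * h w) Filter.atTop (nhds 0) := by
    have hlim := (hsum.tendsto_atTop_zero).const_mul (∑ w, h w)
    rw [mul_zero] at hlim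
    refine squeeze_zero (fun T => Finset.sum_nonneg fun w _ => mul_nonneg (hPnn T u w) (hnn w))
      (fun T => ?_) hlim
    rw [Finset.mul_sum]
    refine Finset.sum_le_sum fun w _ => ?_
    by_cases hw : w = z
    · simp [hw, hs.zero, g]
    · have : h w ≤ ∑ w, h w := Finset.single_le_sum (fun i _ => hnn i) (Finset.mem_univ w)
      simp only [g, if_neg hw, mul_one]
      nlinarith [hPnn T u w]
  have hlim : Filter.Tendsto (fun T : ℕ => ∑ t ∈ Finset.range T, ∑ w, (K ^ t) u w * g w)
      Filter.atTop (nhds (h u)) := by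
    simp only [hpart]
    simpa using hrem.const_sub (h u)
  exact tendsto_nhds_unique hsum.hasSum.tendsto_sum_nat hlim

/-! ### The variational principle -/

/-- The functional `2 Σ_u deg(u) f(u) - Σ_{edges} (f a - f b)²`, written as a sum over ordered
adjacent pairs. Among functions vanishing at `z`, it is maximized by the hitting time of `z`. -/
noncomputable def energy {V : Type*} [Fintype V] (G : SimpleGraph V) (f : V → ℝ) : ℝ :=
  adjSum G fun a b => 2 * f a - (f a - f b) ^ 2 / 2

/-- Green's identity, for a test function `f` that vanishes at the target `z`. -/
lemma green {V : Type*} [Fintype V] {G : SimpleGraph V} {z : V} {h : V → ℝ} (hs : IsSol G z h)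
    (f : V → ℝ) (hf : f z = 0) :
    adjSum G (fun a b => (h a - h b) * (f a - f b) / 2) = adjSum G fun a _ => f a := by
  have h1 : adjSum G (fun a b => (h a - h b) * f a) = adjSum G fun a _ => f a := by
    refine Finset.sum_congr rfl fun a _ => ?_
    by_cases ha : a = z
    · simp [ha, hf]
    · have h2 := congrArg (· * f a) (hs.eq a ha)
      simp only [deg_eq_sum, Finset.sum_mul, ite_mul, zero_mul, one_mul] at h2
      exact h2
  have h2 : adjSum G (fun a b => (h a - h b) * f b) = - adjSum G (fun a b => (h a - h b) * f a) := by
    simp only [adjSum, ← Finset.sum_neg_distrib]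
    rw [Finset.sum_comm]
    refine Finset.sum_congr rfl fun a _ => Finset.sum_congr rfl fun b _ => ?_
    rw [G.adj_comm]
    split_ifs <;> ring
  have h3 : adjSum G (fun a b => (h a - h b) * (f a - f b) / 2)
      = (adjSum G (fun a b => (h a - h b) * f a) - adjSum G (fun a b => (h a - h b) * f b)) / 2 := by
    simp only [adjSum, ← Finset.sum_sub_distrib, Finset.sum_div]
    refine Finset.sum_congr rfl fun a _ => Finset.sum_congr rfl fun b _ => ?_
    split_ifs <;> ring
  rw [h3, h2, h1]; ring

lemma energy_sol {V : Type*} [Fintype V] {G : SimpleGraph V} {z : V} {h : V → ℝ}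
    (hs : IsSol G z h) : energy G h = adjSum G fun a _ => h a := by
  have h1 := green hs h hs.zero
  have h2 : energy G h = 2 * adjSum G (fun a _ => h a)
      - adjSum G (fun a b => (h a - h b) * (h a - h b) / 2) := by
    simp only [energy, adjSum, ← Finset.sum_sub_distrib, Finset.mul_sum]
    refine Finset.sum_congr rfl fun a _ => Finset.sum_congr rfl fun b _ => ?_
    split_ifs <;> ring
  rw [h2, h1]; ring

lemma energy_le {V : Type*} [Fintype V] {G : SimpleGraph V} {z : V} {h : V → ℝ}
    (hs : IsSol G z h) (f : V → ℝ) (hf : f z = 0) : energy G f ≤ adjSum G fun a _ => h a := by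
  have h1 := green hs f hf
  have h0 := green hs h hs.zero
  have h2 : energy G f + adjSum G (fun a b => ((h a - f a) - (h b - f b)) ^ 2 / 2)
      = 2 * adjSum G (fun a _ => f a) - 2 * adjSum G (fun a b => (h a - h b) * (f a - f b) / 2)
        + adjSum G (fun a b => (h a - h b) * (h a - h b) / 2) := by
    simp only [energy, adjSum, ← Finset.sum_sub_distrib, ← Finset.sum_add_distrib, Finset.mul_sum]
    refine Finset.sum_congr rfl fun a _ => Finset.sum_congr rfl fun b _ => ?_
    split_ifs <;> ring
  have h3 : 0 ≤ adjSum G (fun a b => ((h a - f a) - (h b - f b)) ^ 2 / 2) :=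
    Finset.sum_nonneg fun a _ => Finset.sum_nonneg fun b _ => by split_ifs <;> positivity
  linarith

lemma hitPi_eq {V : Type*} [Fintype V] [DecidableEq V] {G : SimpleGraph V} (hG : G.Preconnected)
    {z : V} {h : V → ℝ} (hs : IsSol G z h) :
    hitPi G z = (adjSum G fun a _ => h a) / (2 * (numEdges G : ℝ)) := by
  simp only [hitPi, statPr, hit_eq hG hs, adjSum, Finset.sum_div (s := Finset.univ)]
  refine Finset.sum_congr rfl fun a _ => ?_
  rw [deg_eq_sum, ← Finset.sum_div, div_mul_eq_mul_div, Finset.sum_mul]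
  simp only [ite_mul, one_mul, zero_mul]

/-! ### Moving a leaf -/

/-- If `K` arises from `H`, in which `y` is isolated, by adding the edge `xy`, then the sum over
adjacent pairs gains exactly the two terms of that edge. -/
lemma adjSum_pendant {V : Type*} [Fintype V] {H K : SimpleGraph V} {x y : V} (hxy : x ≠ y)
    (hy : ∀ w, ¬ H.Adj y w)
    (hK : ∀ a b, K.Adj a b ↔ H.Adj a b ∨ (a = x ∧ b = y) ∨ (a = y ∧ b = x)) (F : V → V → ℝ) :
    adjSum K F = adjSum H F + F x y + F y x := by
  have hterm : ∀ a b, (if K.Adj a b then F a b else 0) = (if H.Adj a b then F a b else 0)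
      + (if a = x then (if b = y then F a b else 0) else 0)
      + (if a = y then (if b = x then F a b else 0) else 0) := by
    intro a b
    have h1 : a = y → ¬ H.Adj a b := fun e => e ▸ hy b
    have h2 : b = y → ¬ H.Adj a b := fun e h => hy a (e ▸ h.symm)
    simp only [hK]
    by_cases hax : a = x <;> by_cases hay : a = y <;> by_cases hbx : b = x <;>
      by_cases hby : b = y <;> simp_all
  simp [adjSum, hterm, Finset.sum_add_distrib]

/-- In a tree, every walk from `y` to a vertex of a path `v` passes through the vertex of that
path closest to `y`. -/
lemma mem_support_of_closest {V : Type*} {G : SimpleGraph V} (hG : G.IsTree) {s : ℕ}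
    (v : Fin (s+1) → V)
    (hv : ∀ i : ℕ, ∀ h : i < s, G.Adj (v ⟨i, by omega⟩) (v ⟨i + 1, by omega⟩))
    (y : V) (k : Fin (s+1)) (hk : ∀ i, G.dist y (v k) ≤ G.dist y (v i))
    (j : Fin (s+1)) (p : G.Walk y (v j)) : v k ∈ p.support := by
  have from0 : ∀ i (hi : i < s + 1), ∃ r : G.Walk (v 0) (v ⟨i, hi⟩),
      ∀ u ∈ r.support, u ∈ Set.range v := by
    intro i
    induction i with
    | zero =>
      intro hi
      exact ⟨SimpleGraph.Walk.nil, by simp⟩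
    | succ i ih =>
      intro hi
      obtain ⟨r, hr⟩ := ih (by omega)
      refine ⟨r.concat (hv i (by omega)), fun u hu => ?_⟩
      rw [SimpleGraph.Walk.support_concat] at hu
      simp only [List.mem_append, List.mem_singleton] at hu
      rcases hu with h | h
      · exact hr u h
      · exact ⟨_, h.symm⟩
  obtain ⟨r, hr, hrv⟩ : ∃ r : G.Walk (v k) (v j), r.IsPath ∧ ∀ u ∈ r.support, u ∈ Set.range v := by
    obtain ⟨r₁, h₁⟩ := from0 k k.2
    obtain ⟨r₂, h₂⟩ := from0 j j.2
    refine ⟨(r₁.reverse.append r₂).bypass, SimpleGraph.Walk.bypass_isPath _, fun u hu => ?_⟩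
    have := SimpleGraph.Walk.support_bypass_subset_support _ hu
    rw [SimpleGraph.Walk.mem_support_append_iff, SimpleGraph.Walk.support_reverse,
      List.mem_reverse] at this
    exact this.elim (h₁ u) (h₂ u)
  obtain ⟨q, hq⟩ := hG.connected.exists_walk_length_eq_dist y (v k)
  have hqp : q.IsPath := q.isPath_of_length_eq_dist hq
  -- A shortest walk from `y` to `v k` meets the path `v` only at its end.
  have hqv : ∀ u ∈ q.support, u ∈ Set.range v → u = v k := by
    rintro u hu ⟨i, rfl⟩
    by_contra hne
    have h1 := q.length_takeUntil_lt_length hu hne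
    have h2 := SimpleGraph.dist_le (q.takeUntil _ hu)
    have h3 := hk i
    omega
  have hpath : (q.append r).IsPath := by
    rw [SimpleGraph.Walk.isPath_def, SimpleGraph.Walk.support_append, List.nodup_append']
    refine ⟨hqp.support_nodup, hr.support_nodup.tail, fun u hu hu' => ?_⟩
    have := hqv u hu (hrv u (List.mem_of_mem_tail hu'))
    subst this
    have hn := hr.support_nodup
    rw [← SimpleGraph.Walk.cons_tail_support] at hn
    exact (List.nodup_cons.1 hn).1 hu'
  have huniq : p.bypass = q.append r :=
    (hG.existsUnique_path y (v j)).unique p.bypass_isPath hpath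
  apply SimpleGraph.Walk.support_bypass_subset_support p
  rw [huniq, SimpleGraph.Walk.mem_support_append_iff]
  exact Or.inl q.end_mem_support

/-- If the edges leaving a set `C` avoiding `z` all end at `c`, then every vertex of `C` has a
strictly larger hitting time of `z` than `c`: at a minimum of `h` over `C`, some neighbor must have
a smaller value, and that neighbor can only be `c`. -/
lemma lt_of_separated {V : Type*} [Fintype V] {G : SimpleGraph V} {z : V} {h : V → ℝ}
    (hs : IsSol G z h) (hdeg : ∀ u, u ≠ z → (0 : ℝ) < deg G u) (C : Set V) (c : V) (hz : z ∉ C)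
    (hC : ∀ u ∈ C, ∀ w, G.Adj u w → w ∈ C ∨ w = c) (x : V) (hx : x ∈ C) : h c < h x := by
  obtain ⟨m, hm, hmin⟩ := Set.exists_min_image C h (Set.toFinite C) ⟨x, hx⟩
  refine lt_of_lt_of_le ?_ (hmin x hx)
  by_contra! hle
  have hmz : m ≠ z := fun e => hz (e ▸ hm)
  have h1 := hs.eq m hmz
  have h2 : ∑ w, (if G.Adj m w then h m - h w else 0) ≤ 0 := by
    refine Finset.sum_nonpos fun w _ => ?_
    split_ifs with hw
    · rcases hC m hm w hw with h | rfl
      · linarith [hmin w h]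
      · linarith
    · exact le_rfl
  linarith [hdeg m hmz]

/-- the surgery `σ(G,P;y)` strictly decreases the access times
`H(π, v_j)` for every vertex `v_j` of the path `P`. -/
theorem stmt12 (n d s : ℕ) {V : Type*} [Fintype V] [DecidableEq V]
    (G : SimpleGraph V) (htree : G.IsTree) (hcard : Fintype.card V = n)
    (hdiam : G.diam = d) (hncat : ¬ IsCaterpillar G)
    (v : Fin (s+1) → V) (hpath : IsLeafPath G s v) (hs : s ≤ d)
    (y : V) (hyleaf : IsLeaf G y) (hyP : ∀ i, y ≠ v i) (hynadj : ∀ i, ¬ G.Adj y (v i))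
    (x : V) (hx : G.Adj x y)
    (k : Fin (s+1)) (hk : ∀ i, G.dist y (v k) ≤ G.dist y (v i))
    (G' : SimpleGraph V) (hG' : G' = moveLeaf G x y (v k)) :
    ∀ j : Fin (s+1), hitPi G' (v j) < hitPi G (v j) := by
  intro j
  have hG := htree.connected.preconnected
  have hxy : x ≠ y := hx.ne
  have hky : v k ≠ y := fun e => hyP k e.symm
  have hxk : x ≠ v k := fun e => hynadj k (e ▸ hx.symm)
  have hyx : ∀ w, G.Adj y w → w = x := by
    intro w hw
    have h1 : Nat.card {w // G.Adj y w} = 1 := hyleaf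
    have := (Nat.card_eq_one_iff_unique.1 h1).1
    exact congrArg Subtype.val (Subsingleton.elim (⟨w, hw⟩ : {w // G.Adj y w}) ⟨x, hx.symm⟩)
  -- `H` is the common part of `G` and `G'`.
  let H : SimpleGraph V :=
    { Adj := fun a b => G.Adj a b ∧ a ≠ y ∧ b ≠ y
      symm := ⟨fun a b h => ⟨h.1.symm, h.2.2, h.2.1⟩⟩
      loopless := ⟨fun a h => G.loopless.irrefl a h.1⟩ }
  have hH : ∀ a b, H.Adj a b ↔ G.Adj a b ∧ a ≠ y ∧ b ≠ y := fun _ _ => Iff.rfl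
  have hHy : ∀ w, ¬ H.Adj y w := fun w h => h.2.1 rfl
  have hGH : ∀ a b, G.Adj a b ↔ H.Adj a b ∨ (a = x ∧ b = y) ∨ (a = y ∧ b = x) := by
    intro a b
    rw [hH]
    constructor
    · intro h
      by_cases ha : a = y
      · subst ha; exact Or.inr (Or.inr ⟨rfl, hyx b h⟩)
      · by_cases hb : b = y
        · subst hb; exact Or.inr (Or.inl ⟨hyx a h.symm, rfl⟩)
        · exact Or.inl ⟨h, ha, hb⟩
    · rintro (h | ⟨rfl, rfl⟩ | ⟨rfl, rfl⟩)
      · exact h.1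
      · exact hx
      · exact hx.symm
  have hGH' : ∀ a b, G'.Adj a b ↔ H.Adj a b ∨ (a = v k ∧ b = y) ∨ (a = y ∧ b = v k) := by
    intro a b
    rw [hG', moveLeaf, SimpleGraph.fromEdgeSet_adj, Set.mem_union, Set.mem_sdiff,
      SimpleGraph.mem_edgeSet, Set.mem_singleton_iff, Set.mem_singleton_iff, Sym2.eq_iff,
      Sym2.eq_iff, hGH]
    have h1 : H.Adj a b → a ≠ b ∧ a ≠ y ∧ b ≠ y := fun h => ⟨h.1.ne, h.2⟩
    constructor
    · tauto
    · rintro (h | ⟨rfl, rfl⟩ | ⟨rfl, rfl⟩)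
      · have := h1 h
        tauto
      · exact ⟨Or.inr (Or.inl ⟨rfl, rfl⟩), hky⟩
      · exact ⟨Or.inr (Or.inr ⟨rfl, rfl⟩), hky.symm⟩
  -- Walks in `G` retract to walks in `H`, by sending `y` to its neighbor `x`.
  have hconn' : G'.Preconnected := by
    let ρ : V → V := fun u => if u = y then x else u
    have hstep : ∀ a b, G.Adj a b → G'.Reachable (ρ a) (ρ b) := by
      intro a b hab
      rcases (hGH a b).1 hab with h | ⟨rfl, rfl⟩ | ⟨rfl, rfl⟩
      · have e1 : ρ a = a := if_neg h.2.1
        have e2 : ρ b = b := if_neg h.2.2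
        rw [e1, e2]
        exact ((hGH' a b).2 (Or.inl h)).reachable
      · simp [ρ]
      · simp [ρ]
    have hwalk : ∀ a b (_ : G.Walk a b), G'.Reachable (ρ a) (ρ b) := by
      intro a b p
      induction p with
      | nil => exact SimpleGraph.Reachable.refl _
      | cons h _ ih => exact (hstep _ _ h).trans ih
    have hto : ∀ u, G'.Reachable u (v k) := by
      intro u
      by_cases hu : u = y
      · exact ((hGH' u (v k)).2 (Or.inr (Or.inr ⟨hu, rfl⟩))).reachable
      · obtain ⟨p⟩ := hG u (v k)
        have := hwalk _ _ p
        simpa [ρ, hu, hky] using this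
    exact fun a b => (hto a).trans (hto b).symm
  obtain ⟨h, hs⟩ := exists_isSol hG (v j)
  obtain ⟨h', hs'⟩ := exists_isSol hconn' (v j)
  have hm : (2 * (numEdges G' : ℝ)) = 2 * (numEdges G : ℝ) := by
    rw [two_numEdges, two_numEdges, adjSum_pendant hxy hHy hGH, adjSum_pendant hky hHy hGH']
  have hmpos : 0 < 2 * (numEdges G : ℝ) := by
    have : 0 ≤ adjSum H fun _ _ => 1 :=
      Finset.sum_nonneg fun a _ => Finset.sum_nonneg fun b _ => by split_ifs <;> norm_num
    rw [two_numEdges, adjSum_pendant hxy hHy hGH]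
    linarith
  rw [hitPi_eq hG hs, hitPi_eq hconn' hs', hm]
  refine div_lt_div_of_pos_right ?_ hmpos
  have hlt : h' (v k) < h' x := by
    refine lt_of_separated hs' (fun u hu => ?_)
      -- the vertices, other than `y`, that `v k` separates from `v j` in `G`
      {u | u ≠ v k ∧ u ≠ y ∧ ∀ p : G.Walk u (v j), v k ∈ p.support} (v k) ?_ ?_ x
      ⟨hxk, hxy, fun p => ?_⟩
    · obtain ⟨p⟩ := hconn' u (v j)
      cases p with
      | nil => exact absurd rfl hu
      | cons hac _ => exact deg_pos_of_adj hac
    · rintro ⟨h1, -, h3⟩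
      have := h3 SimpleGraph.Walk.nil
      rw [SimpleGraph.Walk.support_nil, List.mem_singleton] at this
      exact h1 this.symm
    · rintro u ⟨h1, h2, h3⟩ w hw
      by_cases hwk : w = v k
      · exact Or.inr hwk
      · rcases (hGH' u w).1 hw with h | ⟨e, -⟩ | ⟨e, -⟩
        · refine Or.inl ⟨hwk, h.2.2, fun p => ?_⟩
          have := h3 (SimpleGraph.Walk.cons h.1 p)
          rw [SimpleGraph.Walk.support_cons, List.mem_cons] at this
          exact this.resolve_left h1.symm
        · exact absurd e h1
        · exact absurd e h2
    · have := mem_support_of_closest htree v hpath.2.1 y k hk j (SimpleGraph.Walk.cons hx.symm p)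
      rw [SimpleGraph.Walk.support_cons, List.mem_cons] at this
      exact this.resolve_left hky
  -- In `G'` the walk from the leaf `y` has to step to `v k`.
  have hy' : h' y = h' (v k) + 1 := by
    have hyj : y ≠ v j := hyP j
    have h1 := hs'.eq y hyj
    have hadj : ∀ w, G'.Adj y w ↔ w = v k := by
      intro w
      rw [hGH']
      constructor
      · rintro (h | ⟨e, -⟩ | ⟨-, e⟩)
        · exact absurd h (hHy w)
        · exact absurd e.symm hky
        · exact e
      · exact fun e => Or.inr (Or.inr ⟨rfl, e⟩)
    simp only [deg_eq_sum, hadj, Finset.sum_ite_eq', Finset.mem_univ, if_true] at h1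
    linarith
  -- Competitor on `G`: keep `h'` off `y`, and put `y` one step above its neighbor `x`.
  let f : V → ℝ := fun u => if u = y then h' x + 1 else h' u
  have hfne : ∀ u, u ≠ y → f u = h' u := fun u hu => if_neg hu
  have hfy : f y = h' x + 1 := if_pos rfl
  have hle := energy_le hs f (by rw [hfne _ (hyP j).symm, hs'.zero])
  rw [← energy_sol hs']
  refine lt_of_lt_of_le ?_ hle
  rw [energy, energy, adjSum_pendant hxy hHy hGH, adjSum_pendant hky hHy hGH', hfy, hy',
    hfne x hxy]
  have hHeq : adjSum H (fun a b => 2 * f a - (f a - f b) ^ 2 / 2)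
      = adjSum H (fun a b => 2 * h' a - (h' a - h' b) ^ 2 / 2) := by
    refine Finset.sum_congr rfl fun a _ => Finset.sum_congr rfl fun b _ => ?_
    split_ifs with hab
    · dsimp only
      rw [hfne a hab.2.1, hfne b hab.2.2]
    · rfl
  rw [hHeq]
  nlinarith

end RWMix
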